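/- Let Σ = {a,b}, let L ⊆ Σ* be a regular language, and let x_n denote the n-th word over {a,b} in shortlex order. Then the language N = {(n)_2 : n ≥ 0 and x_n ∉ L} of canonical base-2 representations of those indices n with x_n ∉ L is a regular language over the alphabet {0,1}. -/

import Mathlib

/-- `word n` is the `n`-th word over the two-letter alphabet `{a, b}` in shortlex
(dictionary) order, encoding `a` as `false` and `b` as `true`:
`word 0 = Λ`, `word (2n+1) = word n ++ [a]`, `word (2n+2) = word n ++ [b]`. -/
def word : ℕ → List Bool
  | 0 => []
  | n + 1 => word (n / 2) ++ [decide (n % 2 = 1)]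
decreasing_by exact Nat.lt_succ_of_le (Nat.div_le_self n 2)

/-- A language `L ⊆ Σ*` is regular if it is accepted by a deterministic finite
automaton, i.e. by a finite set of states with a transition function, an initial
state, and a set of accepting states. -/
def IsRegularLanguage {α : Type} (L : Set (List α)) : Prop :=
  ∃ (Q : Type) (_ : Fintype Q) (step : Q → α → Q) (start : Q) (accept : Set Q),
    L = {w | w.foldl step start ∈ accept}

/-- `rep n` is the canonical base-2 representation `(n)_2` of `n` as a word over
`{0, 1}` (encoded as `Bool`, `0 = false`, `1 = true`), most significant digit
first, with no leading zeros; `rep 0` is the empty word. -/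
def rep (n : ℕ) : List Bool := (Nat.bits n).reverse

/-!
The binary representation of `n + 1` is a `1` followed by `word n` (reading `a` as `0` and `b` as
`1`), so the states reached by an automaton on `word (n - 1)`, with a fresh state for `n = 0`, form
a sequence `c` computed by an automaton reading `n` in binary, most significant digit first. Passing
from `c n` to `c (n + 1)`, the state reached on `word n`, preserves this property once the values at
`n` and `n + 1` are tracked simultaneously: incrementing `2 * n + 1` yields `2 * (n + 1)`, so a
carry is absorbed by the second component.
-/

lemma foldl_or_some_eq_or_head? {α : Type*} (w : List α) (o : Option α) :
    w.foldl (fun o a => o.or (some a)) o = o.or w.head? := by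
  induction w generalizing o with
  | nil => simp
  | cons a w ih => rw [List.foldl_cons, ih, Option.or_assoc, Option.some_or, List.head?_cons]

section RegularLanguage

variable {α : Type}

lemma isRegularLanguage_iff_isRegular (L : Set (List α)) :
    IsRegularLanguage L ↔ Language.IsRegular (L : Language α) := by
  constructor
  · rintro ⟨Q, hQ, step, start, accept, rfl⟩
    exact ⟨Q, hQ, ⟨step, start, accept⟩, rfl⟩
  · rintro ⟨Q, hQ, M, rfl⟩
    exact ⟨Q, hQ, M.step, M.start, M.accept, rfl⟩

lemma isRegularLanguage_foldl_mem {Q : Type*} [Finite Q] (step : Q → α → Q) (start : Q)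
    (accept : Set Q) : IsRegularLanguage {w | w.foldl step start ∈ accept} := by
  have := Fintype.ofFinite Q
  exact (isRegularLanguage_iff_isRegular _).mpr <|
    Language.isRegular_iff.mpr ⟨Q, inferInstance, ⟨step, start, accept⟩, rfl⟩

lemma IsRegularLanguage.compl {L : Set (List α)} (hL : IsRegularLanguage L) :
    IsRegularLanguage Lᶜ := by
  rw [isRegularLanguage_iff_isRegular] at hL ⊢
  exact hL.compl

lemma IsRegularLanguage.inter {L M : Set (List α)} (hL : IsRegularLanguage L)
    (hM : IsRegularLanguage M) : IsRegularLanguage (L ∩ M) := by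
  rw [isRegularLanguage_iff_isRegular] at hL hM ⊢
  exact hL.inf hM

lemma isRegularLanguage_head?_mem [Finite α] (s : Set (Option α)) :
    IsRegularLanguage {w : List α | w.head? ∈ s} := by
  simpa only [foldl_or_some_eq_or_head?, Option.none_or] using
    isRegularLanguage_foldl_mem (fun o (a : α) => o.or (some a)) none s

end RegularLanguage

/-- The number denoted by a binary word, most significant digit first, leading zeros allowed. -/
def binaryValue (w : List Bool) : ℕ := w.foldl (fun n b => Nat.bit b n) 0

lemma binaryValue_append_singleton (w : List Bool) (b : Bool) :
    binaryValue (w ++ [b]) = Nat.bit b (binaryValue w) := by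
  simp only [binaryValue, List.foldl_append, List.foldl_cons, List.foldl_nil]

lemma rep_zero : rep 0 = [] := by
  simp only [rep, Nat.zero_bits, List.reverse_nil]

lemma rep_bit {n : ℕ} {b : Bool} (h : n = 0 → b = true) :
    rep (Nat.bit b n) = rep n ++ [b] := by
  simp only [rep, Nat.bits_append_bit n b h, List.reverse_cons]

lemma binaryValue_rep (n : ℕ) : binaryValue (rep n) = n := by
  induction n using Nat.binaryRec' with
  | zero => rw [rep_zero]; rfl
  | bit b n h ih => rw [rep_bit h, binaryValue_append_singleton, ih]

lemma head?_rep_ne_some_false (n : ℕ) : (rep n).head? ≠ some false := by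
  induction n using Nat.binaryRec' with
  | zero => simp [rep_zero]
  | bit b n h ih =>
    rw [rep_bit h, List.head?_append]
    rcases eq_or_ne n 0 with rfl | hn
    · simp [rep_zero, h rfl]
    · have hrep : rep n ≠ [] := fun h0 => hn (by rw [← binaryValue_rep n, h0]; rfl)
      rwa [Option.or_of_isSome (List.isSome_head?.mpr hrep)]

lemma rep_binaryValue {w : List Bool} (hw : w.head? ≠ some false) : rep (binaryValue w) = w := by
  induction w using List.reverseRecOn with
  | nil => exact rep_zero
  | append_singleton w b ih =>
    have hw' : w.head? ≠ some false := fun h => hw (by simp [h])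
    have hb : binaryValue w = 0 → b = true := fun h => by
      obtain rfl : w = [] := by rw [← ih hw', h, rep_zero]
      simpa using hw
    rw [binaryValue_append_singleton, rep_bit hb, ih hw']

lemma mem_rep_image_iff {w : List Bool} {s : Set ℕ} :
    w ∈ rep '' s ↔ binaryValue w ∈ s ∧ w.head? ≠ some false := by
  constructor
  · rintro ⟨n, hn, rfl⟩
    exact ⟨(binaryValue_rep n).symm ▸ hn, head?_rep_ne_some_false n⟩
  · rintro ⟨hs, hw⟩
    exact ⟨binaryValue w, hs, rep_binaryValue hw⟩

/-- A sequence is bit-recursive if its value at `2 * n + b` is determined by its value at `n` and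
the bit `b`. A finite-valued such sequence is computed by an automaton, with its values as states,
that reads `n` in binary, most significant digit first. The recursion is required even at
`Nat.bit false 0 = 0`, so leading zeros do not affect the state. -/
def IsBitRecursive {S : Type*} (c : ℕ → S) : Prop :=
  ∃ step : S → Bool → S, ∀ b n, c (Nat.bit b n) = step (c n) b

namespace IsBitRecursive

variable {S : Type*} {c : ℕ → S}

lemma prodMk_succ (hc : IsBitRecursive c) : IsBitRecursive fun n => (c n, c (n + 1)) := by
  obtain ⟨step, hstep⟩ := hc
  refine ⟨fun p b => (step p.1 b, bif b then step p.2 false else step p.1 true), fun b n => ?_⟩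
  have hcarry : Nat.bit true n + 1 = Nat.bit false (n + 1) := by
    simp only [Nat.bit_val, Bool.toNat_true, Bool.toNat_false]; ring
  cases b
  · exact Prod.ext (hstep false n) (hstep true n)
  · exact Prod.ext (hstep true n) ((congrArg c hcarry).trans (hstep false (n + 1)))

lemma isRegularLanguage_rep_image_preimage [Finite S] (hc : IsBitRecursive c) (A : Set S) :
    IsRegularLanguage (rep '' (c ⁻¹' A)) := by
  obtain ⟨step, hstep⟩ := hc
  have hfoldl (w : List Bool) : w.foldl step (c 0) = c (binaryValue w) :=
    List.foldl_hom c fun n b => (hstep b n).symm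
  have hinter : rep '' (c ⁻¹' A) =
      {w | w.foldl step (c 0) ∈ A} ∩ {w | w.head? ∈ ({some false}ᶜ : Set (Option Bool))} := by
    ext w
    rw [mem_rep_image_iff, Set.mem_inter_iff, Set.mem_ofPred_eq, hfoldl]
    rfl
  rw [hinter]
  exact (isRegularLanguage_foldl_mem step (c 0) A).inter
    (isRegularLanguage_head?_mem _)

end IsBitRecursive

lemma word_two_mul_add_one (n : ℕ) : word (2 * n + 1) = word n ++ [false] := by
  rw [word]
  simp

lemma word_two_mul_add_two (n : ℕ) : word (2 * n + 2) = word n ++ [true] := by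
  rw [word, show (2 * n + 1) / 2 = n by omega]
  simp

section WordState

variable {Q : Type*} (step : Q → Bool → Q) (start : Q)

/-- The state reached on `word (n - 1)`, for `n ≥ 1`. The shift by one makes the sequence
bit-recursive; `none` is the state before the leading digit `1` of `n` has been read. -/
def shiftedWordState : ℕ → Option Q
  | 0 => none
  | n + 1 => some ((word n).foldl step start)

lemma isBitRecursive_shiftedWordState : IsBitRecursive (shiftedWordState step start) := by
  refine ⟨fun o b => o.elim (bif b then some start else none) fun q => some (step q b),
    fun b n => ?_⟩
  rcases n with _ | n
  · cases b
    · rfl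
    · simp [shiftedWordState, word]
  · cases b
    · have hbit : Nat.bit false (n + 1) = 2 * n + 1 + 1 := by rw [Nat.bit_false_apply]; ring
      simp [hbit, shiftedWordState, word_two_mul_add_one]
    · have hbit : Nat.bit true (n + 1) = 2 * n + 2 + 1 := by rw [Nat.bit_true_apply]; ring
      simp [hbit, shiftedWordState, word_two_mul_add_two]

end WordState

theorem IsRegularLanguage.rep_image_preimage_word {L : Set (List Bool)}
    (hL : IsRegularLanguage L) : IsRegularLanguage (rep '' (word ⁻¹' L)) := by
  obtain ⟨Q, _, step, start, accept, rfl⟩ := hL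
  have hpair := (isBitRecursive_shiftedWordState step start).prodMk_succ
  convert hpair.isRegularLanguage_rep_image_preimage {p | p.2 ∈ some '' accept} using 2
  ext n
  simp [shiftedWordState]

/-- If `L ⊆ {a,b}*` is regular, then the language
`N = {(n)_2 : n ≥ 0, x_n ∉ L}` of canonical base-2 representations of the
indices `n` with `x_n ∉ L` is a regular language over `{0, 1}`. -/
theorem isRegularLanguage_rep_not_mem (L : Set (List Bool)) (hL : IsRegularLanguage L) :
    IsRegularLanguage {w : List Bool | ∃ n : ℕ, w = rep n ∧ word n ∉ L} := by
  have hN : {w : List Bool | ∃ n : ℕ, w = rep n ∧ word n ∉ L} = rep '' (word ⁻¹' Lᶜ) := by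
    ext w
    simp only [Set.mem_ofPred_eq, Set.mem_image, Set.mem_preimage, Set.mem_compl_iff, and_comm,
      eq_comm]
  rw [hN]
  exact hL.compl.rep_image_preimage_word
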